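/- Let B be a real-valued function on the primes with B(p) ∈ [−1,1] for all primes p, satisfying the Sato-Tate equidistribution hypothesis: for every closed interval I ⊆ [−1,1], the set {p prime : B(p) ∈ I} has natural density μ_ST(I). Define c(p) = (1 − 2√p·B(p))/p. Then the set {p prime : c(p) > 0} has natural density 1/2, and the set {p prime : c(p) < 0} has natural density 1/2. -/

import Mathlib

/-!
Since `c p > 0` is equivalent to `B p < 1 / (2√p)` and this threshold decreases to `0`, the set
`{c > 0}` contains `{B ∈ [-1, 0]}` and, for each `ε > 0`, is contained in `{B ∈ [-1, ε]}` up to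
finitely many primes. The Sato–Tate measure of `[-1, 0]` is `1/2` by symmetry and that of
`[-1, ε]` is at most `1/2 + ε`, so the density of `{c > 0}` is squeezed to `1/2`. Likewise
`{c < 0}` lies inside `{B ∈ [0, 1]}` and contains `{B ∈ [ε, 1]}` up to finitely many primes.
The squeeze is `hasPrimeDensity_of_squeeze`; it uses that there are infinitely many primes, so that
finitely many exceptions do not change a density.
-/

open scoped Classical
open Filter

/-- The prime counting function `π(x)`: the number of primes `≤ x`. -/
noncomputable def primePi (x : ℕ) : ℕ := ((Finset.range (x + 1)).filter Nat.Prime).card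

/-- The number of primes `p ≤ x` lying in the set `S`. -/
noncomputable def primeCount (S : Set ℕ) (x : ℕ) : ℕ :=
  ((Finset.range (x + 1)).filter (fun p => p.Prime ∧ p ∈ S)).card

/-- A set `S` of primes has natural density `δ` if `#{p ∈ S : p ≤ x}/π(x) → δ`. -/
def HasPrimeDensity (S : Set ℕ) (δ : ℝ) : Prop :=
  Filter.Tendsto (fun x : ℕ => (primeCount S x : ℝ) / (primePi x : ℝ)) Filter.atTop (nhds δ)

/-- The Sato–Tate measure of the interval `[a,b]`: `(2/π)∫_a^b √(1-t²) dt`. -/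
noncomputable def muST (a b : ℝ) : ℝ := (2 / Real.pi) * ∫ t in a..b, Real.sqrt (1 - t ^ 2)

theorem tendsto_primePi : Tendsto (fun x : ℕ => (primePi x : ℝ)) atTop atTop := by
  have h : primePi = Nat.primeCounting := by
    funext x
    simp [primePi, Nat.primeCounting, Nat.primeCounting', Nat.count_eq_card_filter_range]
  rw [h]
  exact tendsto_natCast_atTop_atTop.comp Nat.tendsto_primeCounting

theorem primeCount_le_add {S T : Set ℕ} {N : ℕ}
    (h : ∀ p : ℕ, p.Prime → N ≤ p → p ∈ S → p ∈ T) (x : ℕ) :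
    primeCount S x ≤ primeCount T x + N := by
  unfold primeCount
  calc _ ≤ (((Finset.range (x + 1)).filter (fun p => p.Prime ∧ p ∈ T)) ∪ Finset.range N).card := by
        apply Finset.card_le_card
        intro p hp
        simp only [Finset.mem_filter, Finset.mem_union, Finset.mem_range] at hp ⊢
        by_cases hN : N ≤ p
        · exact Or.inl ⟨hp.1, hp.2.1, h p hp.2.1 hN hp.2.2⟩
        · exact Or.inr (not_le.mp hN)
    _ ≤ _ := by
        refine (Finset.card_union_le _ _).trans ?_
        simp

theorem ratio_le_add {S T : Set ℕ} {N : ℕ}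
    (h : ∀ p : ℕ, p.Prime → N ≤ p → p ∈ S → p ∈ T) (x : ℕ) :
    (primeCount S x : ℝ) / primePi x ≤ primeCount T x / primePi x + N / primePi x := by
  rw [← add_div]
  gcongr
  exact_mod_cast primeCount_le_add h x

/-- A set of primes which, for every `ε > 0`, can be enclosed up to finitely many primes between
sets of densities at least `δ - ε` and at most `δ + ε` has density `δ`. -/
theorem hasPrimeDensity_of_squeeze {S : Set ℕ} {δ : ℝ}
    (hl : ∀ ε : ℝ, 0 < ε → ∃ (T : Set ℕ) (d : ℝ) (N : ℕ), HasPrimeDensity T d ∧ δ - ε ≤ d ∧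
      ∀ p : ℕ, p.Prime → N ≤ p → p ∈ T → p ∈ S)
    (hu : ∀ ε : ℝ, 0 < ε → ∃ (T : Set ℕ) (d : ℝ) (N : ℕ), HasPrimeDensity T d ∧ d ≤ δ + ε ∧
      ∀ p : ℕ, p.Prime → N ≤ p → p ∈ S → p ∈ T) :
    HasPrimeDensity S δ := by
  have hN (N : ℕ) : Tendsto (fun x : ℕ => (N : ℝ) / primePi x) atTop (nhds 0) :=
    tendsto_primePi.const_div_atTop _
  refine tendsto_order.2 ⟨fun a ha => ?_, fun a ha => ?_⟩
  · obtain ⟨T, d, N, hT, hd, h⟩ := hl ((δ - a) / 2) (by linarith)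
    have ht := hT.sub (hN N)
    filter_upwards [ht.eventually_const_lt (show a < d - 0 by linarith)] with x hx
    have := ratio_le_add h x
    linarith
  · obtain ⟨T, d, N, hT, hd, h⟩ := hu ((a - δ) / 2) (by linarith)
    have ht := hT.add (hN N)
    filter_upwards [ht.eventually_lt_const (show d + 0 < a by linarith)] with x hx
    have := ratio_le_add h x
    linarith

theorem continuous_semicircle : Continuous fun t : ℝ => Real.sqrt (1 - t ^ 2) := by fun_prop

theorem muST_add (a b c : ℝ) : muST a b + muST b c = muST a c := by
  unfold muST
  rw [← mul_add, intervalIntegral.integral_add_adjacent_intervals] <;>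
    exact continuous_semicircle.intervalIntegrable _ _

theorem muST_neg_one_one : muST (-1) 1 = 1 := by
  unfold muST
  rw [integral_sqrt_one_sub_sq]
  field_simp

theorem muST_neg_one_zero : muST (-1) 0 = 1 / 2 := by
  have h1 : muST (-1) 0 = muST 0 1 := by
    unfold muST
    congr 1
    have := intervalIntegral.integral_comp_neg (a := 0) (b := 1)
      (fun t : ℝ => Real.sqrt (1 - t ^ 2))
    simpa using this.symm
  have h2 := muST_neg_one_one
  have := muST_add (-1) 0 1
  linarith

theorem muST_zero_one : muST 0 1 = 1 / 2 := by
  have h2 := muST_neg_one_one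
  have := muST_add (-1) 0 1
  have := muST_neg_one_zero
  linarith

/-- The Sato–Tate density `(2/π)√(1-t²)` is at most `1`. -/
theorem muST_zero_le {ε : ℝ} (h : 0 ≤ ε) : muST 0 ε ≤ ε := by
  unfold muST
  have h1 : ∫ t in (0 : ℝ)..ε, Real.sqrt (1 - t ^ 2) ≤ ∫ _ in (0 : ℝ)..ε, (1 : ℝ) := by
    apply intervalIntegral.integral_mono_on h
      (continuous_semicircle.intervalIntegrable _ _) (by simp)
    intro t _
    exact Real.sqrt_le_one.2 (by nlinarith)
  simp only [intervalIntegral.integral_const, sub_zero, smul_eq_mul, mul_one] at h1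
  have h2 : 2 / Real.pi ≤ 1 := (div_le_one Real.pi_pos).2 Real.two_le_pi
  calc _ ≤ 2 / Real.pi * ε := by gcongr
    _ ≤ 1 * ε := by gcongr
    _ = ε := one_mul ε

theorem exists_one_le_sqrt_mul {ε : ℝ} (h : 0 < ε) :
    ∃ N : ℕ, ∀ p : ℕ, N ≤ p → 1 ≤ Real.sqrt p * ε := by
  obtain ⟨N, hN⟩ := exists_nat_ge ((1 / ε) ^ 2)
  refine ⟨N, fun p hp => ?_⟩
  have : 1 / ε ≤ Real.sqrt p := Real.le_sqrt_of_sq_le (hN.trans (by exact_mod_cast hp))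
  rwa [div_le_iff₀ h] at this

theorem stmt_18 (B c : ℕ → ℝ)
    (hB : ∀ p : ℕ, p.Prime → B p ∈ Set.Icc (-1 : ℝ) 1)
    (hST : ∀ a b : ℝ, -1 ≤ a → a ≤ b → b ≤ 1 →
      HasPrimeDensity {p | B p ∈ Set.Icc a b} (muST a b))
    (hc : ∀ p : ℕ, p.Prime → c p = (1 - 2 * Real.sqrt p * B p) / p) :
    HasPrimeDensity {p | 0 < c p} (1 / 2) ∧ HasPrimeDensity {p | c p < 0} (1 / 2) := by
  have hpos (p : ℕ) (hp : p.Prime) : 0 < c p ↔ 2 * Real.sqrt p * B p < 1 := by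
    have : (0 : ℝ) < p := by exact_mod_cast hp.pos
    rw [hc p hp, div_pos_iff_of_pos_right this, sub_pos]
  have hneg (p : ℕ) (hp : p.Prime) : c p < 0 ↔ 1 < 2 * Real.sqrt p * B p := by
    have : (0 : ℝ) < p := by exact_mod_cast hp.pos
    rw [hc p hp, div_lt_iff₀ this, zero_mul, sub_neg]
  constructor
  · refine hasPrimeDensity_of_squeeze (fun ε hε => ?_) (fun ε hε => ?_)
    · refine ⟨_, _, 0, hST (-1) 0 le_rfl (by norm_num) (by norm_num), ?_, fun p hp _ h => ?_⟩
      · rw [muST_neg_one_zero]; linarith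
      · have : B p ≤ 0 := h.2
        refine (hpos p hp).2 ?_
        nlinarith [Real.sqrt_nonneg p]
    · -- The Sato–Tate hypothesis only concerns subintervals of `[-1, 1]`.
      have he : 0 < min ε 1 := lt_min hε one_pos
      obtain ⟨N, hN⟩ := exists_one_le_sqrt_mul he
      refine ⟨_, _, N, hST (-1) (min ε 1) le_rfl (by linarith) (min_le_right _ _), ?_,
        fun p hp hpN h => ⟨(hB p hp).1, ?_⟩⟩
      · have := muST_add (-1) 0 (min ε 1)
        have := muST_zero_le he.le
        have := min_le_left ε 1
        linarith [muST_neg_one_zero]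
      · have h1 := (hpos p hp).1 h
        by_contra! h2
        nlinarith [Real.sqrt_nonneg p, hN p hpN]
  · refine hasPrimeDensity_of_squeeze (fun ε hε => ?_) (fun ε hε => ?_)
    · have he : 0 < min ε 1 := lt_min hε one_pos
      obtain ⟨N, hN⟩ := exists_one_le_sqrt_mul he
      refine ⟨_, _, N, hST (min ε 1) 1 (by linarith) (min_le_right _ _) le_rfl, ?_,
        fun p hp hpN h => (hneg p hp).2 ?_⟩
      · have := muST_add 0 (min ε 1) 1
        have := muST_zero_le he.le
        have := min_le_left ε 1
        linarith [muST_zero_one]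
      · have h2 : min ε 1 ≤ B p := h.1
        nlinarith [Real.sqrt_nonneg p, hN p hpN]
    · refine ⟨_, _, 0, hST 0 1 (by norm_num) (by norm_num) le_rfl, ?_,
        fun p hp _ h => ⟨?_, (hB p hp).2⟩⟩
      · rw [muST_zero_one]; linarith
      · have h1 := (hneg p hp).1 h
        by_contra! h2
        nlinarith [Real.sqrt_nonneg p]
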